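/- Let m ≥ 1 be an integer with m ≠ 3 such that the odd part of m^2 + 16 is squarefree, and let K_m = ℚ(θ) with θ a root of P_m(x) = x^4 - m x^3 - 6 x^2 + m x + 1. Then K_m is a cyclic extension of ℚ of degree 4, and if θ is a root of P_m then (θ - 1)/(θ + 1) is also a root of P_m. -/

import Mathlib

/-!
Write `Pm m` over `ℤ`. Its values at `1` and `-1` are both `-4`, so it has no rational root, and
comparing coefficients shows that a splitting into two integral quadratics would force `m = 0` or
`m = ±3`. By Gauss's lemma `Pm m` is irreducible over `ℚ` for `m ≥ 1`, `m ≠ 3`, whence `K = ℚ(θ)`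
has degree 4.

The Möbius map `x ↦ (x - 1) / (x + 1)` permutes the roots of `Pm m`, so it induces an automorphism
`σ` of `K` with `σ θ = (θ - 1) / (θ + 1)`. Its square sends `θ` to `-1 / θ ≠ θ`, and its fourth
power fixes `θ`. Thus `σ` has order 4, the degree of `K`, which makes `K / ℚ` Galois with group
generated by `σ`.
-/


open Polynomial IntermediateField NumberField

noncomputable def Pm (m : ℤ) : Polynomial ℚ :=
  X ^ 4 - C (m : ℚ) * X ^ 3 - 6 * X ^ 2 + C (m : ℚ) * X + 1

/-- The odd part of a natural number: `n` with all factors of 2 removed. -/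
def oddPart (n : ℕ) : ℕ := n / 2 ^ (n.factorization 2)

lemma aeval_Pm {K : Type*} [Field K] [Algebra ℚ K] (m : ℤ) (x : K) :
    aeval x (Pm m) = x ^ 4 - m * x ^ 3 - 6 * x ^ 2 + m * x + 1 := by
  have h6 : aeval x (6 : ℚ[X]) = 6 := map_ofNat _ 6
  simp [Pm, h6]

/-- The integral model of `Pm m`. -/
noncomputable def intPm (m : ℤ) : ℤ[X] :=
  X ^ 4 - C m * X ^ 3 - C 6 * X ^ 2 + C m * X + 1

lemma intPm_map (m : ℤ) : (intPm m).map (algebraMap ℤ ℚ) = Pm m := by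
  simp [intPm, Pm]

lemma intPm_natDegree (m : ℤ) : (intPm m).natDegree = 4 := by
  unfold intPm; compute_degree!

lemma intPm_monic (m : ℤ) : (intPm m).Monic := by
  unfold intPm; monicity!

lemma intPm_eval (m x : ℤ) : (intPm m).eval x = x ^ 4 - m * x ^ 3 - 6 * x ^ 2 + m * x + 1 := by
  simp [intPm]

lemma eval_of_monic_natDegree_two {g : ℤ[X]} (hg : g.Monic) (hd : g.natDegree = 2) (x : ℤ) :
    g.eval x = x ^ 2 + g.coeff 1 * x + g.coeff 0 := by
  have h2 : g.coeff 2 = 1 := hd ▸ hg.coeff_natDegree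
  rw [eval_eq_sum_range, hd]
  simp [Finset.sum_range_succ, h2]
  ring

lemma intPm_irreducible (m : ℤ) (hm : 1 ≤ m) (hm3 : m ≠ 3) : Irreducible (intPm m) := by
  rw [(intPm_monic m).irreducible_iff_natDegree']
  refine ⟨fun h => ?_, fun f g hf hg hfg hmem => ?_⟩
  · have := intPm_natDegree m
    simp [h] at this
  have hsum : f.natDegree + g.natDegree = 4 := by
    rw [← hf.natDegree_mul hg, hfg, intPm_natDegree]
  have ev (x : ℤ) : f.eval x * g.eval x = x ^ 4 - m * x ^ 3 - 6 * x ^ 2 + m * x + 1 := by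
    rw [← eval_mul, hfg, intPm_eval]
  rw [intPm_natDegree, Finset.mem_Ioc] at hmem
  obtain hd | hd : g.natDegree = 1 ∨ g.natDegree = 2 := by omega
  · -- A monic linear factor gives an integral root, which divides the constant term `1`.
    have hroot : g.eval (-g.coeff 0) = 0 := by
      have h1 : g.coeff 1 = 1 := hd ▸ hg.coeff_natDegree
      rw [eval_eq_sum_range, hd]
      simp [Finset.sum_range_succ, h1]
    have h := ev (-g.coeff 0)
    rw [hroot, mul_zero] at h
    generalize g.coeff 0 = b at h
    have hb : b ∣ 1 := ⟨-b ^ 3 - m * b ^ 2 + 6 * b + m, by linear_combination -h⟩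
    rcases Int.isUnit_iff.mp (isUnit_of_dvd_one hb) with rfl | rfl <;> norm_num at h <;> omega
  · have hdf : f.natDegree = 2 := by omega
    simp only [eval_of_monic_natDegree_two hf hdf, eval_of_monic_natDegree_two hg hd] at ev
    generalize f.coeff 0 = d at ev
    generalize f.coeff 1 = c at ev
    generalize g.coeff 0 = b at ev
    generalize g.coeff 1 = a at ev
    -- Values at five points determine the coefficients of both sides.
    have e0 := ev 0
    have e1 := ev 1
    have e2 := ev (-1)
    have e3 := ev 2
    have e4 := ev (-2)
    have c0 : d * b = 1 := by linarith
    have c1 : c * b + d * a = m := by linarith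
    have c2 : b + d + a * c = -6 := by linarith
    have c3 : a + c = -m := by linarith
    obtain ⟨rfl, rfl⟩ | ⟨rfl, rfl⟩ := Int.mul_eq_one_iff_eq_one_or_neg_one.mp c0
    · omega
    · have hac : a * c = -4 := by linarith
      have ha : a ∣ 4 := ⟨-c, by linarith⟩
      have h1 := Int.le_of_dvd (by norm_num) ha
      have h2 := Int.le_of_dvd (by norm_num) (neg_dvd.mpr ha)
      have h3 : -4 ≤ a := by omega
      interval_cases a <;> omega

lemma Pm_irreducible (m : ℤ) (hm : 1 ≤ m) (hm3 : m ≠ 3) : Irreducible (Pm m) := by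
  rw [← intPm_map, ← (intPm_monic m).irreducible_iff_irreducible_map_fraction_map]
  exact intPm_irreducible m hm hm3

lemma Pm_monic (m : ℤ) : (Pm m).Monic := intPm_map m ▸ (intPm_monic m).map _

lemma Pm_natDegree (m : ℤ) : (Pm m).natDegree = 4 := by
  rw [← intPm_map, (intPm_monic m).natDegree_map, intPm_natDegree]

lemma add_one_ne_zero_of_root {K : Type*} [Field K] [CharZero K] [Algebra ℚ K] {m : ℤ} {x : K}
    (hx : aeval x (Pm m) = 0) : x + 1 ≠ 0 := by
  intro h
  obtain rfl : x = -1 := by linear_combination h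
  rw [aeval_Pm] at hx
  have h4 : (4 : K) = 0 := by linear_combination -hx
  norm_num at h4

lemma ne_zero_of_root {K : Type*} [Field K] [Algebra ℚ K] {m : ℤ} {x : K}
    (hx : aeval x (Pm m) = 0) : x ≠ 0 := by
  rintro rfl
  simp [aeval_Pm] at hx

/-- Clearing denominators, the identity is `(x + 1) ^ 4 * P ((x - 1) / (x + 1)) = -4 * P x`. -/
lemma aeval_moebius {K : Type*} [Field K] [CharZero K] [Algebra ℚ K] {m : ℤ} {x : K}
    (hx : aeval x (Pm m) = 0) : aeval ((x - 1) / (x + 1)) (Pm m) = 0 := by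
  have h1 := add_one_ne_zero_of_root hx
  rw [aeval_Pm] at hx ⊢
  field_simp
  linear_combination -4 * hx

/-- A common root of `Pm m` and `x ^ 2 + 1` would satisfy `m * x = -4`, hence `m ^ 2 = -16`. -/
lemma sq_ne_neg_one_of_root {K : Type*} [Field K] [CharZero K] [Algebra ℚ K] {m : ℤ} {x : K}
    (hx : aeval x (Pm m) = 0) : x ^ 2 ≠ -1 := by
  intro h
  rw [aeval_Pm] at hx
  have h1 : 2 * (m * x + 4) = 0 := by
    linear_combination hx - (x ^ 2 - m * x - 7) * h
  have h2 : (m : K) * x + 4 = 0 := by simpa using h1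
  have h3 : ((m ^ 2 + 16 : ℤ) : K) = 0 := by
    push_cast
    linear_combination (m : K) ^ 2 * h - (m * x - 4) * h2
  have h4 : m ^ 2 + 16 = 0 := by exact_mod_cast h3
  nlinarith [sq_nonneg m]

theorem stmt_14 (m : ℤ) (hm : 1 ≤ m) (hm3 : m ≠ 3)
    (hsf : Squarefree (oddPart ((m ^ 2 + 16).natAbs)))
    (K : Type) [Field K] [NumberField K] (θ : K)
    (hθ : Polynomial.aeval θ (Pm m) = 0)
    (hgen : IntermediateField.adjoin ℚ {θ} = ⊤) :
    IsGalois ℚ K ∧ IsCyclic (K ≃ₐ[ℚ] K) ∧ Module.finrank ℚ K = 4 ∧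
      ∀ η : K, Polynomial.aeval η (Pm m) = 0 →
        Polynomial.aeval ((η - 1) / (η + 1)) (Pm m) = 0 := by
  have hirr := Pm_irreducible m hm hm3
  have hmin : minpoly ℚ θ = Pm m :=
    (minpoly.eq_of_irreducible_of_monic hirr hθ (Pm_monic m)).symm
  have hint : IsIntegral ℚ θ := ⟨Pm m, Pm_monic m, hθ⟩
  have hfin : Module.finrank ℚ K = 4 := by
    rw [← IntermediateField.finrank_top', ← hgen, IntermediateField.adjoin.finrank hint, hmin,
      Pm_natDegree]
  let pb := PowerBasis.ofAdjoinEqTop hint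
    (Algebra.adjoin_eq_top_of_primitive_element hint.isAlgebraic hgen)
  have hpb : pb.gen = θ := PowerBasis.ofAdjoinEqTop_gen _ _
  let φ : K →ₐ[ℚ] K := pb.lift ((θ - 1) / (θ + 1)) (by
    rw [hpb, hmin]
    exact aeval_moebius hθ)
  have hφ : φ θ = (θ - 1) / (θ + 1) := by
    conv_lhs => rw [← hpb]
    exact pb.lift_gen _ _
  let σ : K ≃ₐ[ℚ] K := AlgEquiv.ofBijective φ (Algebra.IsAlgebraic.algHom_bijective φ)
  have hσ : σ θ = (θ - 1) / (θ + 1) := hφ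
  have h0 := ne_zero_of_root hθ
  have h1 := add_one_ne_zero_of_root hθ
  have hσ2 : (σ ^ 2) θ = -1 / θ := by
    have e : (θ - 1) / (θ + 1) + 1 = 2 * θ / (θ + 1) := by
      field_simp
      ring
    rw [pow_two, AlgEquiv.mul_apply, hσ, map_div₀, map_sub, map_add, map_one, hσ, e]
    field_simp
    ring
  have hσ4 : (σ ^ 4) θ = θ := by
    rw [show σ ^ 4 = σ ^ 2 * σ ^ 2 from pow_add σ 2 2, AlgEquiv.mul_apply, hσ2, map_div₀, map_neg,
      map_one, hσ2]
    field_simp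
  have hne : ¬ σ ^ 2 ^ 1 = 1 := by
    intro h
    rw [pow_one] at h
    rw [h, AlgEquiv.one_apply, eq_div_iff h0] at hσ2
    exact sq_ne_neg_one_of_root hθ (by rw [pow_two, hσ2])
  have hone : σ ^ 2 ^ (1 + 1) = 1 := by
    have : ((σ ^ 4 : K ≃ₐ[ℚ] K) : K →ₐ[ℚ] K) = AlgHom.id ℚ K := by
      apply pb.algHom_ext
      rw [hpb]
      exact hσ4
    ext x
    exact DFunLike.congr_fun this x
  have hord : orderOf σ = 4 := orderOf_eq_prime_pow hne hone
  -- The group has at most `4 = [K : ℚ]` elements, so an element of order 4 exhausts it.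
  have hcard : Nat.card (K ≃ₐ[ℚ] K) = 4 := by
    apply le_antisymm
    · rw [← hfin, Nat.card_eq_fintype_card]
      exact AlgEquiv.card_le
    · rw [← hord]
      exact Nat.le_of_dvd Nat.card_pos (orderOf_dvd_natCard σ)
  exact ⟨IsGalois.of_card_aut_eq_finrank ℚ K (hcard.trans hfin.symm),
    isCyclic_of_orderOf_eq_card σ (hord.trans hcard.symm), hfin, fun η hη => aeval_moebius hη⟩
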